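/- Suppose the GI/G/1-type Markov chain is irreducible, aperiodic and positive recurrent and the phase matrix A is stochastic. Then the sequence of stationary probability vectors {π_k}_{k≥1} is light-tailed if and only if min(φ_{A+}, φ_{B+}) > 1, equivalently, if and only if both matrix sequences {A_k}_{k≥1} and {B_k}_{k≥1} are light-tailed. -/

import Mathlib

open Filter Topology
open scoped ENNReal NNReal BigOperators

namespace GIG1

/-- The state space of a `GI/G/1`-type Markov chain: level `i : ℕ`, phase `j : Fin m`. -/
abbrev S (m : ℕ) := ℕ × Fin m

/-- The transition kernel of the `GI/G/1`-type Markov chain with matrix blocks `A, B`. -/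
noncomputable def P {m : ℕ} (A B : ℤ → Matrix (Fin m) (Fin m) ℝ) : S m → S m → ℝ
  | (0, j), (k, s) => B (k : ℤ) j s
  | (i + 1, j), (0, s) => B (-(i + 1 : ℤ)) j s
  | (i + 1, j), (k + 1, s) => A ((k : ℤ) - (i : ℤ)) j s

/-- `n`-step transition probabilities. -/
noncomputable def Pn {m : ℕ} (P : S m → S m → ℝ) : ℕ → S m → S m → ℝ
  | 0, x, y => if x = y then 1 else 0
  | n + 1, x, y => ∑' z : S m, P x z * Pn P n z y

def Stochastic {m : ℕ} (P : S m → S m → ℝ) : Prop :=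
  (∀ x y, 0 ≤ P x y) ∧ ∀ x, HasSum (P x) 1

def ChainIrreducible {m : ℕ} (P : S m → S m → ℝ) : Prop :=
  ∀ x y, ∃ n, 1 ≤ n ∧ 0 < Pn P n x y

def ChainAperiodic {m : ℕ} (P : S m → S m → ℝ) : Prop :=
  ∀ x, ∃ N, ∀ n ≥ N, 0 < Pn P n x x

/-- `pd` is a stationary probability distribution of `P`; for an irreducible aperiodic chain
this is equivalent to positive recurrence. -/
def IsStationary {m : ℕ} (P : S m → S m → ℝ) (pd : S m → ℝ) : Prop :=
  (∀ x, 0 ≤ pd x) ∧ HasSum pd 1 ∧ ∀ y, HasSum (fun x => pd x * P x y) (pd y)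

/-- The phase matrix `A = ∑ₖ Aₖ`. -/
noncomputable def matA {m : ℕ} (A : ℤ → Matrix (Fin m) (Fin m) ℝ) : Matrix (Fin m) (Fin m) ℝ :=
  Matrix.of fun r s => ∑' k : ℤ, A k r s

/-- The phase matrix `A = ∑ₖ Aₖ` is stochastic. -/
def PhaseStochastic {m : ℕ} (A : ℤ → Matrix (Fin m) (Fin m) ℝ) : Prop :=
  ∀ r, HasSum (fun p : ℤ × Fin m => A p.1 r p.2) 1

/-- Irreducibility of a nonnegative matrix. -/
def MatIrreducible {m : ℕ} (M : Matrix (Fin m) (Fin m) ℝ) : Prop :=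
  ∀ r s, ∃ n, 1 ≤ n ∧ 0 < (M ^ n) r s

/-- Radius of convergence of a power series with nonnegative coefficients. -/
noncomputable def radius (c : ℕ → ℝ) : ℝ≥0∞ :=
  ⨆ (r : ℝ≥0) (_ : Summable fun k => c k * (r : ℝ) ^ k), (r : ℝ≥0∞)

/-- `φ_{A+}`: the minimum over entries of the radii of convergence of `∑_{k ≥ 1} A_k(r,s) z^k`. -/
noncomputable def phiA {m : ℕ} (A : ℤ → Matrix (Fin m) (Fin m) ℝ) : ℝ≥0∞ :=
  ⨅ (r : Fin m) (s : Fin m), radius fun k => A ((k : ℤ) + 1) r s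

/-- `φ_{B+}`. -/
noncomputable def phiB {m : ℕ} (B : ℤ → Matrix (Fin m) (Fin m) ℝ) : ℝ≥0∞ :=
  ⨅ (r : Fin m) (s : Fin m), radius fun k => B ((k : ℤ) + 1) r s

/-- The matrix sequence `{C_k}_{k ≥ 1}` is light-tailed. -/
def LightMat {m : ℕ} (C : ℤ → Matrix (Fin m) (Fin m) ℝ) : Prop :=
  ∀ r s, ∃ ε > (0 : ℝ),
    Summable fun k : ℕ => C ((k : ℤ) + 1) r s * Real.exp (ε * ((k : ℝ) + 1))

/-- `A^*(z) = ∑_{k ∈ ℤ} z^k A_k` for complex `z`. -/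
noncomputable def AstarC {m : ℕ} (A : ℤ → Matrix (Fin m) (Fin m) ℝ) (z : ℂ) :
    Matrix (Fin m) (Fin m) ℂ :=
  Matrix.of fun r s => ∑' k : ℤ, (A k r s : ℂ) * z ^ k

/-- `A^*(z) = ∑_{k ∈ ℤ} z^k A_k` for real `z`. -/
noncomputable def AstarR {m : ℕ} (A : ℤ → Matrix (Fin m) (Fin m) ℝ) (z : ℝ) :
    Matrix (Fin m) (Fin m) ℝ :=
  Matrix.of fun r s => ∑' k : ℤ, A k r s * z ^ k

/-- The set `Ω = {z ∈ ℂ : 1 < |z| < φ_{A+}, det(I - A^*(z)) = 0}`. -/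
def Omega {m : ℕ} (A : ℤ → Matrix (Fin m) (Fin m) ℝ) : Set ℂ :=
  {z | 1 < ‖z‖ ∧ ENNReal.ofReal ‖z‖ < phiA A ∧ (1 - AstarC A z).det = 0}

/-- `η`: the minimal modulus of an element of `Ω`, or `∞` when `Ω = ∅`. -/
noncomputable def eta {m : ℕ} (A : ℤ → Matrix (Fin m) (Fin m) ℝ) : ℝ≥0∞ :=
  sInf ((fun z : ℂ => ENNReal.ofReal ‖z‖) '' Omega A)

/-- The largest (Perron–Frobenius) eigenvalue of a nonnegative matrix. -/
noncomputable def chi {m : ℕ} (M : Matrix (Fin m) (Fin m) ℝ) : ℝ :=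
  sSup {r : ℝ | ∃ v : Fin m → ℝ, v ≠ 0 ∧ M.mulVec v = r • v}

/-!
Necessity is immediate from invariance: `π (1, r) * A_{k+1}(r, s) ≤ π (k + 2, s)` and
`π (0, r) * B_{k+1}(r, s) ≤ π (k + 1, s)`, where `π > 0`.

For sufficiency, solve the Poisson equation of the phase process to find `g` such that the
increments of `level + g(phase)` have the same mean `σ` from every phase. If `σ ≥ 0`, then
`f = max (level + g(phase)) 0` is a submartingale with bounded mean increments; stationarity forces
its drift to vanish, so `{f = 0}` is closed and irreducibility gives `f = 0`, which is absurd. Hence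
`σ < 0`, and `σ` stays negative when the downward jumps are truncated at a large depth. The
truncated increments have exponential moments, so `exp (ε * f)` satisfies a geometric drift
inequality for small `ε > 0` and is therefore `π`-summable.
-/

/-! ### Light-tailed sequences -/

section LightTail

/-- A light-tailed sequence `c₁, c₂, …`. As in `radius` and `LightMat`, sequences are stored from
index `0`, so `c k` is the term of index `k + 1`. -/
def LightTail (c : ℕ → ℝ) : Prop :=
  ∃ ε > (0 : ℝ), Summable fun k : ℕ => c k * Real.exp (ε * ((k : ℝ) + 1))

variable {c d : ℕ → ℝ}

theorem summable_mul_exp_succ_iff (ε : ℝ) :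
    (Summable fun k : ℕ => c k * Real.exp (ε * ((k : ℝ) + 1))) ↔
      Summable fun k => c k * Real.exp ε ^ k := by
  simp only [mul_comm ε, add_mul, one_mul, Real.exp_add, Real.exp_nat_mul, ← mul_assoc,
    summable_mul_right_iff (Real.exp_pos ε).ne']

theorem one_lt_radius_iff_lightTail : 1 < radius c ↔ LightTail c := by
  simp only [radius, lt_iSup_iff, LightTail, summable_mul_exp_succ_iff]
  constructor
  · rintro ⟨r, hsum, hr⟩
    have one_lt_r : (1 : ℝ) < r := by exact_mod_cast hr
    exact ⟨Real.log r, Real.log_pos one_lt_r, by rwa [Real.exp_log (by linarith)]⟩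
  · rintro ⟨ε, hε, hsum⟩
    exact ⟨⟨Real.exp ε, (Real.exp_pos ε).le⟩, hsum,
      ENNReal.coe_lt_coe.2 (NNReal.coe_lt_coe.1 (Real.one_lt_exp_iff.2 hε))⟩

theorem LightTail.comp_succ (hc : LightTail c) : LightTail fun k => c (k + 1) := by
  obtain ⟨ε, hε, hsum⟩ := hc
  rw [summable_mul_exp_succ_iff, ← summable_nat_add_iff 1] at hsum
  refine ⟨ε, hε, ?_⟩
  simpa only [pow_succ, ← mul_assoc, summable_mul_right_iff (Real.exp_pos ε).ne',
    ← summable_mul_exp_succ_iff] using hsum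

theorem LightTail.of_le_mul {C : ℝ} (hd : LightTail d) (hc : ∀ k, 0 ≤ c k)
    (hcd : ∀ k, c k ≤ C * d k) : LightTail c := by
  obtain ⟨ε, hε, hsum⟩ := hd
  refine ⟨ε, hε, (hsum.mul_left C).of_nonneg_of_le
    (fun k => mul_nonneg (hc k) (Real.exp_pos _).le) fun k => ?_⟩
  rw [← mul_assoc]
  exact mul_le_mul_of_nonneg_right (hcd k) (Real.exp_pos _).le

theorem LightTail.eventually_summable (hlight : LightTail c) (hc : ∀ k, 0 ≤ c k) :
    ∀ᶠ ε : ℝ in 𝓝[>] 0, Summable fun k : ℕ => c k * Real.exp (ε * ((k : ℝ) + 1)) := by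
  obtain ⟨ε₀, hε₀, hsum⟩ := hlight
  filter_upwards [Ioc_mem_nhdsGT hε₀] with ε hε
  refine hsum.of_nonneg_of_le (fun k => mul_nonneg (hc k) (Real.exp_pos _).le) fun k => ?_
  gcongr
  · exact hc k
  · exact hε.2

theorem one_lt_iInf_radius_iff_lightMat {m : ℕ} {C : ℤ → Matrix (Fin m) (Fin m) ℝ} :
    1 < (⨅ (r : Fin m) (s : Fin m), radius fun k => C ((k : ℤ) + 1) r s) ↔ LightMat C := by
  have one_lt_iInf_iff (f : Fin m → ℝ≥0∞) : 1 < ⨅ r, f r ↔ ∀ r, 1 < f r := by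
    simp only [← Finset.inf_univ_eq_iInf, Finset.lt_inf_iff ENNReal.one_lt_top, Finset.mem_univ,
      true_imp_iff]
  simp only [one_lt_iInf_iff, one_lt_radius_iff_lightTail, LightTail, LightMat]

end LightTail

/-! ### Weighted sums -/

section WeightedSums

variable {ι : Type*}

theorem hasSum_prod_of_fintype {κ M : Type*} [Fintype κ] [AddCommMonoid M] [TopologicalSpace M]
    [ContinuousAdd M] {f : ι × κ → M} {a : κ → M} (h : ∀ s, HasSum (fun i => f (i, s)) (a s)) :
    HasSum f (∑ s, a s) := by
  classical
  have hslice (s) : HasSum (fun p : ι × κ => if p.2 = s then f p else 0) (a s) := by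
    refine ((Prod.mk_left_injective s).hasSum_iff fun p hp => if_neg fun hps => ?_).1 ?_
    · exact hp ⟨p.1, Prod.ext rfl hps.symm⟩
    · simpa only [Function.comp_def, if_true] using h s
  simpa only [Finset.sum_ite_eq, Finset.mem_univ, if_true] using
    hasSum_sum (s := Finset.univ) fun s _ => hslice s

variable {a x : ι → ℝ}

theorem summable_mul_max_of_summable_mul_max_zero (ha : ∀ i, 0 ≤ a i) (hsum : Summable a)
    (hpos : Summable fun i => a i * max (x i) 0) (c : ℝ) :
    Summable fun i => a i * max (x i) c := by
  refine Summable.of_norm_bounded (hpos.add (hsum.mul_right |c|)) fun i => ?_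
  have abs_max_le : |max (x i) c| ≤ max (x i) 0 + |c| := by
    rcases max_cases (x i) c with h | h <;> rcases abs_cases c with hc | hc <;>
      rcases abs_cases (max (x i) c) with hm | hm <;> rcases max_cases (x i) 0 with h0 | h0 <;>
      linarith
  rw [Real.norm_eq_abs, abs_mul, abs_of_nonneg (ha i), ← mul_add]
  exact mul_le_mul_of_nonneg_left abs_max_le (ha i)

/-- If all truncated means are nonnegative then the negative part is summable, because the partial
sums of `a * max (-x) 0` are bounded by the sum of `a * max x 0`. -/
theorem summable_mul_of_tsum_truncate_nonneg (ha : ∀ i, 0 ≤ a i) (hsum : Summable a)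
    (hpos : Summable fun i => a i * max (x i) 0)
    (htrunc : ∀ K : ℕ, 0 ≤ ∑' i, a i * max (x i) (-K)) : Summable fun i => a i * x i := by
  have summable_neg : Summable fun i => a i * (max (x i) 0 - x i) := by
    refine summable_of_sum_le (c := ∑' i, a i * max (x i) 0)
      (fun i => mul_nonneg (ha i) (sub_nonneg.2 (le_max_left _ _))) fun F => ?_
    obtain ⟨K, hK⟩ := exists_nat_ge (∑ i ∈ F, |x i|)
    have neg_K_le (i) (hi : i ∈ F) : -(K : ℝ) ≤ x i := by
      have := Finset.single_le_sum (fun j _ => abs_nonneg (x j)) hi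
      linarith [neg_abs_le (x i)]
    have hsummableK := summable_mul_max_of_summable_mul_max_zero ha hsum hpos (-K)
    have hdiff := hpos.sub hsummableK
    calc ∑ i ∈ F, a i * (max (x i) 0 - x i)
        = ∑ i ∈ F, (a i * max (x i) 0 - a i * max (x i) (-K)) :=
          Finset.sum_congr rfl fun i hi => by rw [max_eq_left (neg_K_le i hi), mul_sub]
      _ ≤ ∑' i, (a i * max (x i) 0 - a i * max (x i) (-K)) :=
          hdiff.sum_le_tsum F fun i _ => sub_nonneg.2 <| mul_le_mul_of_nonneg_left
            (max_le_max le_rfl (neg_nonpos.2 K.cast_nonneg)) (ha i)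
      _ ≤ ∑' i, a i * max (x i) 0 := by
          rw [hpos.tsum_sub hsummableK]
          exact sub_le_self _ (htrunc K)
  exact (hpos.sub summable_neg).congr fun i => by ring

theorem tsum_mul_nonneg_of_tsum_truncate_nonneg (hsum : Summable fun i => a i * x i)
    (htrunc : ∀ K : ℕ, 0 ≤ ∑' i, a i * max (x i) (-K)) : 0 ≤ ∑' i, a i * x i := by
  have hlim : Tendsto (fun K : ℕ => ∑' i, a i * max (x i) (-K)) atTop (𝓝 (∑' i, a i * x i)) := by
    refine tendsto_tsum_of_dominated_convergence hsum.norm (fun i => ?_)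
      (Eventually.of_forall fun K i => ?_)
    · obtain ⟨K₀, hK₀⟩ := exists_nat_ge (-x i)
      refine tendsto_const_nhds.congr' ?_
      filter_upwards [eventually_ge_atTop K₀] with K hK
      have : (K₀ : ℝ) ≤ K := by exact_mod_cast hK
      rw [max_eq_left (by linarith)]
    · have abs_max_le : |max (x i) (-K)| ≤ |x i| := by
        have : (0 : ℝ) ≤ K := K.cast_nonneg
        rcases max_cases (x i) (-K) with h | h
        · rw [h.1]
        · rw [h.1, abs_neg, abs_of_nonneg this]
          linarith [neg_abs_le (x i)]
      rw [norm_mul, norm_mul]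
      exact mul_le_mul_of_nonneg_left abs_max_le (norm_nonneg _)
  exact ge_of_tendsto' hlim htrunc

theorem exists_truncated_mean_neg_or_summable {κ : Type*} [Fintype κ] {w : κ → ℝ}
    {b : κ → ι → ℝ} (hw : ∀ r, 0 < w r) (hb : ∀ r i, 0 ≤ b r i) (hsum : ∀ r, Summable (b r))
    (hpos : ∀ r, Summable fun i => b r i * max (x i) 0) :
    (∃ K : ℕ, ∑ r, w r * ∑' i, b r i * max (x i) (-K) < 0) ∨
      (∀ r, Summable fun i => b r i * x i) ∧ 0 ≤ ∑ r, w r * ∑' i, b r i * x i := by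
  have hasSum_joint {c : ι → ℝ} (hc : ∀ r, Summable fun i => b r i * c i) :
      HasSum (fun q : ι × κ => w q.2 * b q.2 q.1 * c q.1) (∑ r, w r * ∑' i, b r i * c i) :=
    hasSum_prod_of_fintype fun r => by simpa only [mul_assoc] using (hc r).hasSum.mul_left (w r)
  have weight_nonneg (q : ι × κ) : 0 ≤ w q.2 * b q.2 q.1 := mul_nonneg (hw q.2).le (hb q.2 q.1)
  have summable_weight : Summable fun q : ι × κ => w q.2 * b q.2 q.1 :=
    (hasSum_prod_of_fintype fun r => (hsum r).hasSum.mul_left (w r)).summable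
  refine or_iff_not_imp_left.2 fun hneg => ?_
  push Not at hneg
  have htrunc (K : ℕ) : 0 ≤ ∑' q : ι × κ, w q.2 * b q.2 q.1 * max (x q.1) (-K) :=
    (hneg K).trans_eq (hasSum_joint fun r =>
      summable_mul_max_of_summable_mul_max_zero (hb r) (hsum r) (hpos r) (-K)).tsum_eq.symm
  have summable_joint : Summable fun q : ι × κ => w q.2 * b q.2 q.1 * x q.1 :=
    summable_mul_of_tsum_truncate_nonneg (a := fun q : ι × κ => w q.2 * b q.2 q.1)
      (x := fun q => x q.1) weight_nonneg summable_weight (hasSum_joint hpos).summable htrunc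
  have summable_slice (r) : Summable fun i => b r i * x i := by
    have := summable_joint.comp_injective (Prod.mk_left_injective r)
    simpa only [Function.comp_def, mul_assoc, summable_mul_left_iff (hw r).ne'] using this
  refine ⟨summable_slice, ?_⟩
  rw [← (hasSum_joint summable_slice).tsum_eq]
  exact tsum_mul_nonneg_of_tsum_truncate_nonneg summable_joint htrunc

theorem summable_mul_of_summable_mul_exp {ε : ℝ} (hε : 0 < ε) (ha : ∀ i, 0 ≤ a i)
    (hx : ∀ i, 0 ≤ x i) (hexp : Summable fun i => a i * Real.exp (ε * x i)) :
    Summable fun i => a i * x i := by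
  refine (hexp.mul_left ε⁻¹).of_nonneg_of_le (fun i => mul_nonneg (ha i) (hx i)) fun i => ?_
  rw [mul_left_comm]
  exact mul_le_mul_of_nonneg_left (Real.le_inv_mul_exp (x i) hε) (ha i)

theorem abs_inv_mul_exp_sub_one_le {ε δ : ℝ} (hε : 0 < ε) (hεδ : ε ≤ δ) (t : ℝ) :
    |ε⁻¹ * (Real.exp (ε * t) - 1)| ≤ δ⁻¹ * Real.exp (δ * |t|) := by
  have hδ : 0 < δ := hε.trans_le hεδ
  have convexity : Real.exp (ε * t) ≤ ε / δ * Real.exp (δ * t) + (1 - ε / δ) := by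
    have := convexOn_exp.2 (Set.mem_univ (δ * t)) (Set.mem_univ 0) (by positivity : 0 ≤ ε / δ)
      (sub_nonneg.2 ((div_le_one hδ).2 hεδ)) (by ring)
    simpa only [smul_eq_mul, mul_zero, add_zero, Real.exp_zero, mul_one, ← mul_assoc,
      div_mul_cancel₀ ε hδ.ne'] using this
  have lower : t ≤ ε⁻¹ * (Real.exp (ε * t) - 1) := by
    rw [inv_mul_eq_div, le_div_iff₀ hε]
    linarith [Real.add_one_le_exp (ε * t)]
  have upper : ε⁻¹ * (Real.exp (ε * t) - 1) ≤ δ⁻¹ * (Real.exp (δ * t) - 1) := by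
    rw [inv_mul_le_iff₀ hε, ← mul_assoc, ← div_eq_mul_inv]
    linarith
  have exp_le : δ⁻¹ * (Real.exp (δ * t) - 1) ≤ δ⁻¹ * Real.exp (δ * |t|) := by
    have : Real.exp (δ * t) ≤ Real.exp (δ * |t|) := by
      gcongr
      exact le_abs_self t
    gcongr
    linarith
  exact abs_le.2 ⟨by linarith [Real.le_inv_mul_exp |t| hδ, neg_abs_le t], upper.trans exp_le⟩

/-- The difference quotients `ε⁻¹ * (exp (ε * x) - 1)` tend to `x` and are dominated by
`δ⁻¹ * exp (δ * |x|)`, so the moment generating function has the mean as its right derivative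
at `0`. -/
theorem eventually_tsum_mul_exp_lt_one {δ : ℝ} (hδ : 0 < δ) (ha : HasSum a 1)
    (hexp : Summable fun i => a i * Real.exp (δ * |x i|)) (hmean : ∑' i, a i * x i < 0) :
    ∀ᶠ ε : ℝ in 𝓝[>] 0,
      (Summable fun i => a i * Real.exp (ε * x i)) ∧ ∑' i, a i * Real.exp (ε * x i) < 1 := by
  have quotient_le (ε : ℝ) (hε : ε ∈ Set.Ioc 0 δ) (i) :
      ‖a i * (ε⁻¹ * (Real.exp (ε * x i) - 1))‖ ≤ δ⁻¹ * ‖a i * Real.exp (δ * |x i|)‖ := by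
    rw [norm_mul, norm_mul (a i), Real.norm_of_nonneg (Real.exp_pos (δ * |x i|)).le, mul_left_comm]
    exact mul_le_mul_of_nonneg_left (abs_inv_mul_exp_sub_one_le hε.1 hε.2 _) (norm_nonneg _)
  have hlim : Tendsto (fun ε : ℝ => ∑' i, a i * (ε⁻¹ * (Real.exp (ε * x i) - 1))) (𝓝[>] 0)
      (𝓝 (∑' i, a i * x i)) := by
    refine tendsto_tsum_of_dominated_convergence (hexp.norm.mul_left δ⁻¹) (fun i => ?_) ?_
    · have hderiv : HasDerivAt (fun ε : ℝ => Real.exp (ε * x i)) (x i) 0 := by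
        simpa using ((hasDerivAt_id (0 : ℝ)).mul_const (x i)).exp
      simpa using hderiv.tendsto_slope_zero_right.const_mul (a i)
    · filter_upwards [Ioc_mem_nhdsGT hδ] with ε hε using quotient_le ε hε
  filter_upwards [hlim.eventually_lt_const hmean, Ioc_mem_nhdsGT hδ] with ε hneg hε
  have hquot : HasSum (fun i => a i * (ε⁻¹ * (Real.exp (ε * x i) - 1))) _ :=
    (Summable.of_norm_bounded (hexp.norm.mul_left δ⁻¹) (quotient_le ε hε)).hasSum
  have hmgf := (ha.add (hquot.mul_left ε)).congr_fun fun i => show a i * Real.exp (ε * x i) = _ by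
    rw [mul_left_comm, mul_inv_cancel_left₀ hε.1.ne']
    ring
  refine ⟨hmgf.summable, ?_⟩
  rw [hmgf.tsum_eq]
  linarith [mul_neg_of_pos_of_neg hε.1 hneg]

end WeightedSums

/-! ### Irreducibility and the Poisson equation -/

section Irreducible

theorem forall_of_isIrreducible {α : Type*} {Q : Matrix α α ℝ} (hQ : Q.IsIrreducible)
    {p : α → Prop} (hp : ∀ x y, p x → 0 < Q x y → p y) {x : α} (hx : p x) (y : α) : p y := by
  let := Q.toQuiver
  obtain ⟨path, -⟩ := hQ.connected x y
  induction path with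
  | nil => exact hx
  | cons _ edge ih => exact hp _ _ ih edge.down

variable {m : ℕ} {Q : S m → S m → ℝ}

theorem Pn_nonneg (hQ : ∀ x y, 0 ≤ Q x y) (n : ℕ) (x y : S m) : 0 ≤ Pn Q n x y := by
  induction n generalizing x with
  | zero =>
    rw [Pn]
    split_ifs <;> norm_num
  | succ n ih => exact tsum_nonneg fun z => mul_nonneg (hQ x z) (ih z)

theorem exists_path_of_Pn_pos (hQ : ∀ x y, 0 ≤ Q x y) {n : ℕ} {x y : S m} (h : 0 < Pn Q n x y) :
    letI := (Matrix.of Q).toQuiver; ∃ path : Quiver.Path x y, path.length = n := by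
  let := (Matrix.of Q).toQuiver
  induction n generalizing x with
  | zero =>
    rw [Pn] at h
    split_ifs at h with hxy
    · exact ⟨hxy ▸ .nil, by cases hxy; rfl⟩
    · exact absurd h (lt_irrefl _)
  | succ n ih =>
    obtain ⟨z, hz⟩ : ∃ z, Q x z * Pn Q n z y ≠ 0 := by
      by_contra! hzero
      rw [Pn, tsum_congr hzero, tsum_zero] at h
      exact lt_irrefl _ h
    let edge : x ⟶ z := PLift.up ((hQ x z).lt_of_ne' (left_ne_zero_of_mul hz))
    obtain ⟨path, hpath⟩ := ih ((Pn_nonneg hQ n z y).lt_of_ne' (right_ne_zero_of_mul hz))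
    exact ⟨edge.toPath.comp path, by
      rw [Quiver.Path.length_comp, hpath, Quiver.Path.length_toPath, add_comm]⟩

theorem ChainIrreducible.isIrreducible (hirr : ChainIrreducible Q) (hQ : ∀ x y, 0 ≤ Q x y) :
    (Matrix.of Q).IsIrreducible where
  nonneg := hQ
  connected x y := by
    obtain ⟨n, hn, hpos⟩ := hirr x y
    obtain ⟨path, hpath⟩ := exists_path_of_Pn_pos hQ hpos
    exact ⟨path, by omega⟩

end Irreducible

section Poisson

open Matrix

variable {n : Type*} [Fintype n] [DecidableEq n] {M : Matrix n n ℝ} {g : n → ℝ}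

theorem mulVec_const_of_mem_rowStochastic (hM : M ∈ rowStochastic ℝ n) (c : ℝ) :
    (M *ᵥ fun _ => c) = fun _ => c := by
  ext i
  simp only [mulVec, dotProduct, ← Finset.sum_mul, sum_row_of_mem_rowStochastic hM, one_mul]

/-- Minimum principle: the set where `g` is minimal is closed under transitions. -/
theorem eq_of_mulVec_le (hM : M ∈ rowStochastic ℝ n) (hirr : M.IsIrreducible)
    (hg : M *ᵥ g ≤ g) (i j : n) : g i = g j := by
  have : Nonempty n := ⟨i⟩
  obtain ⟨t, ht⟩ := Finite.exists_min g
  have eq_min : ∀ u, g u = g t := by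
    refine forall_of_isIrreducible hirr (p := fun u => g u = g t) (fun a b ha hab => ?_) rfl
    have excess_le : M a b * (g b - g t) ≤ ∑ s, M a s * (g s - g t) :=
      Finset.single_le_sum (f := fun s => M a s * (g s - g t))
        (fun s _ => mul_nonneg (hirr.nonneg a s) (sub_nonneg.2 (ht s))) (Finset.mem_univ b)
    have sum_excess : ∑ s, M a s * (g s - g t) = (M *ᵥ g) a - g t := by
      simp only [mul_sub, Finset.sum_sub_distrib, ← Finset.sum_mul,
        sum_row_of_mem_rowStochastic hM, one_mul, mulVec, dotProduct]
    have : M a b * (g b - g t) ≤ 0 := by linarith [hg a]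
    linarith [ht b, nonpos_of_mul_nonpos_right this hab]
  rw [eq_min i, eq_min j]

theorem eq_of_mulVec_eq_add_const (hM : M ∈ rowStochastic ℝ n) (hirr : M.IsIrreducible)
    {c : ℝ} (hg : ∀ i, (M *ᵥ g) i = g i + c) (i j : n) : g i = g j := by
  rcases le_total c 0 with hc | hc
  · exact eq_of_mulVec_le hM hirr (fun i => by linarith [hg i]) i j
  · refine neg_injective (eq_of_mulVec_le (g := -g) hM hirr (fun i => ?_) i j)
    rw [mulVec_neg, Pi.neg_apply, Pi.neg_apply, hg i]
    linarith

theorem exists_linearMap_poisson (hM : M ∈ rowStochastic ℝ n) (hirr : M.IsIrreducible) (i₀ : n) :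
    ∃ G : (n → ℝ) →ₗ[ℝ] n → ℝ, ∀ d i, d i + (M *ᵥ G d) i - G d i = G d i₀ := by
  let N : (n → ℝ) →ₗ[ℝ] n → ℝ :=
    LinearMap.id - M.mulVecLin + (LinearMap.proj i₀).smulRight (fun _ => 1)
  have N_apply (g : n → ℝ) (i : n) : N g i = g i - (M *ᵥ g) i + g i₀ := by simp [N]
  have N_injective : Function.Injective N := by
    refine (injective_iff_map_eq_zero N).2 fun g hg => ?_
    have mulVec_g (i) : (M *ᵥ g) i = g i + g i₀ := by
      have := congrFun hg i
      rw [N_apply, Pi.zero_apply] at this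
      linarith
    have g_eq : g = fun _ => g i₀ :=
      funext fun i => eq_of_mulVec_eq_add_const hM hirr mulVec_g i i₀
    have : (M *ᵥ g) i₀ = g i₀ := by rw [g_eq, mulVec_const_of_mem_rowStochastic hM]
    rw [g_eq, show g i₀ = 0 by linarith [mulVec_g i₀]]
    rfl
  let G := (LinearEquiv.ofInjectiveEndo N N_injective).symm
  refine ⟨G.toLinearMap, fun d i => ?_⟩
  have N_G : N (G d) i = d i :=
    congrFun ((LinearEquiv.ofInjectiveEndo N N_injective).apply_symm_apply d) i
  rw [N_apply] at N_G
  rw [LinearEquiv.coe_coe]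
  linarith

/-- The weights `w` are the stationary distribution of `M`. -/
theorem exists_weights_poisson [Nonempty n] (hM : M ∈ rowStochastic ℝ n)
    (hirr : M.IsIrreducible) :
    ∃ w : n → ℝ, (∀ i, 0 < w i) ∧
      ∀ d : n → ℝ, ∃ g : n → ℝ, ∀ i, d i + (M *ᵥ g) i - g i = w ⬝ᵥ d := by
  obtain ⟨i₀⟩ := ‹Nonempty n›
  obtain ⟨G, hG⟩ := exists_linearMap_poisson hM hirr i₀
  refine ⟨G.toMatrix' i₀, fun t => ?_, fun d => ⟨G d, fun i => ?_⟩⟩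
  · rw [LinearMap.toMatrix'_apply]
    set g := G (Pi.single t 1) with hg
    by_contra! w_nonpos
    have g_eq : g = fun _ => g i₀ := by
      refine funext fun i => eq_of_mulVec_le hM hirr (fun i => ?_) i i₀
      have : (0 : n → ℝ) ≤ Pi.single t 1 := Pi.single_nonneg.2 zero_le_one
      linarith [hG (Pi.single t 1) i, this i, show (0 : n → ℝ) i = 0 from rfl]
    have hGt := hG (Pi.single t 1) t
    rw [← hg, g_eq, mulVec_const_of_mem_rowStochastic hM, Pi.single_eq_same] at hGt
    linarith
  · rw [hG, ← LinearMap.toMatrix'_mulVec G d]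
    rfl

end Poisson

/-! ### Drift criteria for invariant weights -/

/-- A summable nonnegative weight `π` that is invariant under the stochastic kernel `Q` on a
countable state space (the state space is unrestricted, as summability confines `π` to countably
many states). Unlike `IsStationary` it is not tied to the state space of levels and phases, and its
total mass is arbitrary. -/
structure InvariantWeight {α : Type*} (Q : α → α → ℝ) (π : α → ℝ) : Prop where
  kernel_nonneg : ∀ x y, 0 ≤ Q x y
  hasSum_kernel : ∀ x, HasSum (Q x) 1
  nonneg : ∀ x, 0 ≤ π x
  summable : Summable π
  hasSum_mul_kernel : ∀ y, HasSum (fun x => π x * Q x y) (π y)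

namespace InvariantWeight

variable {α : Type*} {Q : α → α → ℝ} {π f : α → ℝ}

theorem mul_kernel_le (h : InvariantWeight Q π) (x y : α) : π x * Q x y ≤ π y :=
  le_hasSum (h.hasSum_mul_kernel y) x fun z _ => mul_nonneg (h.nonneg z) (h.kernel_nonneg z y)

theorem pos (h : InvariantWeight Q π) (hirr : (Matrix.of Q).IsIrreducible) {x : α}
    (hx : π x ≠ 0) (y : α) : 0 < π y :=
  forall_of_isIrreducible hirr (p := fun x => 0 < π x)
    (fun x y hx hxy => (mul_pos hx hxy).trans_le (h.mul_kernel_le x y))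
    ((h.nonneg x).lt_of_ne' hx) y

theorem norm_mul_kernel_mul_le (h : InvariantWeight Q π) {s t : ℝ} (hst : |s| ≤ t) (x y : α) :
    ‖π x * Q x y * s‖ ≤ π x * Q x y * t := by
  have weight_nonneg := mul_nonneg (h.nonneg x) (h.kernel_nonneg x y)
  rw [norm_mul, Real.norm_of_nonneg weight_nonneg]
  exact mul_le_mul_of_nonneg_left hst weight_nonneg

theorem summable_prod (h : InvariantWeight Q π) {F : α → α → ℝ} {C : ℝ} (hF : ∀ x y, 0 ≤ F x y)
    (hsum : ∀ x, Summable fun y => Q x y * F x y) (hbound : ∀ x, ∑' y, Q x y * F x y ≤ C) :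
    Summable fun p : α × α => π p.1 * Q p.1 p.2 * F p.1 p.2 := by
  have term_nonneg (x y) : 0 ≤ Q x y * F x y := mul_nonneg (h.kernel_nonneg x y) (hF x y)
  have joint_nonneg : 0 ≤ fun p : α × α => π p.1 * (Q p.1 p.2 * F p.1 p.2) :=
    fun p => mul_nonneg (h.nonneg p.1) (term_nonneg p.1 p.2)
  simp only [mul_assoc]
  refine (summable_prod_of_nonneg joint_nonneg).2 ⟨fun x => (hsum x).mul_left (π x), ?_⟩
  simp only [tsum_mul_left]
  exact (h.summable.mul_right C).of_nonneg_of_le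
    (fun x => mul_nonneg (h.nonneg x) (tsum_nonneg (term_nonneg x)))
    fun x => mul_le_mul_of_nonneg_left (hbound x) (h.nonneg x)

theorem summable_prod_of_bounded (h : InvariantWeight Q π) {F : α × α → ℝ} {C : ℝ}
    (hF : ∀ p, |F p| ≤ C) : Summable fun p => π p.1 * Q p.1 p.2 * F p := by
  have hconst : Summable fun p : α × α => π p.1 * Q p.1 p.2 * 1 :=
    h.summable_prod (F := fun _ _ => 1) (C := 1) (fun _ _ => zero_le_one)
      (fun x => by simpa only [mul_one] using (h.hasSum_kernel x).summable)
      fun x => by simp only [mul_one, (h.hasSum_kernel x).tsum_eq, le_refl]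
  refine Summable.of_norm_bounded (hconst.mul_right C) fun p => ?_
  rw [mul_one]
  exact h.norm_mul_kernel_mul_le (hF p) p.1 p.2

theorem hasSum_prod_mul_sub_of_bounded (h : InvariantWeight Q π) {C : ℝ} (hf : ∀ x, |f x| ≤ C) :
    HasSum (fun p : α × α => π p.1 * Q p.1 p.2 * (f p.2 - f p.1)) 0 := by
  have hsource := (h.summable_prod_of_bounded fun p => hf p.1).hasSum
  have htarget := (h.summable_prod_of_bounded fun p => hf p.2).hasSum
  have source_fiberwise : HasSum (fun x => π x * f x) _ := hsource.prod_fiberwise fun x => by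
    simpa only [mul_one, mul_right_comm] using ((h.hasSum_kernel x).mul_left (π x)).mul_right (f x)
  have target_fiberwise : HasSum (fun y => π y * f y) _ :=
    ((Equiv.prodComm α α).hasSum_iff.2 htarget).prod_fiberwise fun y =>
      (h.hasSum_mul_kernel y).mul_right (f y)
  simpa only [mul_sub, source_fiberwise.unique target_fiberwise, sub_self]
    using htarget.sub hsource

theorem hasSum_prod_mul_sub (h : InvariantWeight Q π)
    (hf : Summable fun p : α × α => π p.1 * Q p.1 p.2 * |f p.2 - f p.1|) :
    HasSum (fun p : α × α => π p.1 * Q p.1 p.2 * (f p.2 - f p.1)) 0 := by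
  let clamp (N : ℕ) (t : ℝ) : ℝ := Set.projIcc (-N : ℝ) N (neg_le_self N.cast_nonneg) t
  have tendsto_clamp (t) : Tendsto (clamp · t) atTop (𝓝 t) := by
    obtain ⟨N₀, hN₀⟩ := exists_nat_ge |t|
    refine tendsto_const_nhds.congr' ?_
    filter_upwards [eventually_ge_atTop N₀] with N hN
    have ht : t ∈ Set.Icc (-N : ℝ) N := abs_le.1 (hN₀.trans (Nat.cast_le.2 hN))
    simp only [clamp, Set.projIcc_of_mem _ ht]
  have hlim := tendsto_tsum_of_dominated_convergence (𝓕 := atTop) hf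
    (fun p => ((tendsto_clamp (f p.2)).sub (tendsto_clamp (f p.1))).const_mul (π p.1 * Q p.1 p.2))
    (Eventually.of_forall fun N p => h.norm_mul_kernel_mul_le (Set.abs_projIcc_sub_projIcc _) _ _)
  have tsum_eq_zero : ∑' p : α × α, π p.1 * Q p.1 p.2 * (f p.2 - f p.1) = 0 :=
    tendsto_nhds_unique hlim <| tendsto_const_nhds.congr fun N =>
      (h.hasSum_prod_mul_sub_of_bounded (f := fun x => clamp N (f x))
        fun x => abs_le.2 (Set.projIcc _ _ _ (f x)).2).tsum_eq.symm
  rw [← tsum_eq_zero]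
  exact (Summable.of_norm_bounded hf fun p => h.norm_mul_kernel_mul_le le_rfl _ _).hasSum

theorem hasSum_mul_drift (h : InvariantWeight Q π)
    (hf : Summable fun p : α × α => π p.1 * Q p.1 p.2 * |f p.2 - f p.1|) :
    HasSum (fun x => π x * ∑' y, Q x y * (f y - f x)) 0 := by
  have hjoint := h.hasSum_prod_mul_sub hf
  refine hjoint.prod_fiberwise fun x => ?_
  simpa only [mul_assoc, tsum_mul_left] using (hjoint.summable.prod_factor x).hasSum

theorem drift_eq_zero_of_nonneg (h : InvariantWeight Q π) {C : ℝ}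
    (hsum : ∀ x, Summable fun y => Q x y * |f y - f x|)
    (hbound : ∀ x, ∑' y, Q x y * |f y - f x| ≤ C)
    (hdrift : ∀ x, 0 ≤ ∑' y, Q x y * (f y - f x)) {x : α} (hx : π x ≠ 0) :
    ∑' y, Q x y * (f y - f x) = 0 := by
  have hjoint := h.summable_prod (fun x y => abs_nonneg (f y - f x)) hsum hbound
  have mul_drift_eq_zero := congrFun
    ((hasSum_zero_iff_of_nonneg fun x => mul_nonneg (h.nonneg x) (hdrift x)).1
      (h.hasSum_mul_drift hjoint)) x
  exact (mul_eq_zero.1 mul_drift_eq_zero).resolve_left hx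

theorem tsum_mul_min_sub_le (h : InvariantWeight Q π) {V : α → ℝ} {x : α}
    (hV : ∀ y, 0 ≤ V y) (hsum : Summable fun y => Q x y * V y) {N : ℝ} (hx : V x ≤ N) :
    ∑' y, Q x y * (min (V y) N - min (V x) N) ≤ ∑' y, Q x y * V y - V x := by
  have hQ := h.hasSum_kernel x
  have hdiff : HasSum (fun y => Q x y * (V y - V x)) (∑' y, Q x y * V y - V x) := by
    simpa only [mul_sub, one_mul] using hsum.hasSum.sub (hQ.mul_right (V x))
  have hmin : Summable fun y => Q x y * min (V y) N :=
    hsum.of_nonneg_of_le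
      (fun y => mul_nonneg (h.kernel_nonneg x y) (le_min (hV y) ((hV x).trans hx)))
      fun y => mul_le_mul_of_nonneg_left (min_le_left _ _) (h.kernel_nonneg x y)
  have hmin_diff : Summable fun y => Q x y * (min (V y) N - min (V x) N) := by
    simpa only [mul_sub] using hmin.sub (hQ.summable.mul_right (min (V x) N))
  refine hasSum_le (fun y => ?_) hmin_diff.hasSum hdiff
  rw [min_eq_left hx]
  exact mul_le_mul_of_nonneg_left (sub_le_sub_right (min_le_left _ _) _) (h.kernel_nonneg x y)

theorem hasSum_mul_min_drift (h : InvariantWeight Q π) {V : α → ℝ} (hV : ∀ x, 0 ≤ V x) {N : ℝ}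
    (hN : 0 ≤ N) : HasSum (fun x => π x * ∑' y, Q x y * (min (V y) N - min (V x) N)) 0 := by
  refine h.hasSum_mul_drift (h.summable_prod_of_bounded (C := N) fun p => ?_)
  rw [abs_abs]
  exact abs_sub_le_of_nonneg_of_le (le_min (hV _) hN) (min_le_right _ _) (le_min (hV _) hN)
    (min_le_right _ _)

/-- The drift of the bounded function `min V N` is at most `b`, and at most `b - (1 - γ) * V`
where `V ≤ N`. As it averages to `0` under `π`, the sum of `π * (1 - γ) * V` over a finite set is at
most `b * ∑ π`. -/
theorem summable_mul_of_geometric_drift (h : InvariantWeight Q π) {V : α → ℝ} {γ b : ℝ}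
    (hγ : γ < 1) (hb : 0 ≤ b) (hV : ∀ x, 0 ≤ V x) (hsum : ∀ x, Summable fun y => Q x y * V y)
    (hdrift : ∀ x, ∑' y, Q x y * V y ≤ γ * V x + b) : Summable fun x => π x * V x := by
  let drift (N : ℕ) (x : α) : ℝ := ∑' y, Q x y * (min (V y) N - min (V x) N)
  have drift_le_of_le (N : ℕ) (x) (hx : V x ≤ N) : drift N x ≤ b - (1 - γ) * V x :=
    (h.tsum_mul_min_sub_le hV (hsum x) hx).trans (by linarith [hdrift x])
  have drift_le (N : ℕ) (x) : drift N x ≤ b := by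
    rcases le_total (V x) N with hx | hx
    · linarith [drift_le_of_le N x hx, mul_nonneg (sub_nonneg.2 hγ.le) (hV x)]
    · refine le_trans (tsum_nonpos fun y => mul_nonpos_of_nonneg_of_nonpos (h.kernel_nonneg x y) ?_)
        hb
      rw [min_eq_right hx]
      exact sub_nonpos.2 (min_le_right _ _)
  have partial_sum_le (F : Finset α) : ∑ x ∈ F, π x * ((1 - γ) * V x) ≤ (∑' x, π x) * b := by
    obtain ⟨N, hN⟩ := exists_nat_ge (∑ x ∈ F, V x)
    have hslack : HasSum (fun x => π x * (b - drift N x)) ((∑' x, π x) * b) := by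
      have := (h.summable.hasSum.mul_right b).sub (h.hasSum_mul_min_drift hV N.cast_nonneg)
      simpa only [← mul_sub, sub_zero] using this
    refine le_trans (Finset.sum_le_sum fun x hx => mul_le_mul_of_nonneg_left ?_ (h.nonneg x))
      (sum_le_hasSum F (fun x _ => mul_nonneg (h.nonneg x) (sub_nonneg.2 (drift_le N x))) hslack)
    linarith [drift_le_of_le N x ((Finset.single_le_sum (fun y _ => hV y) hx).trans hN)]
  have hscaled : Summable fun x => π x * ((1 - γ) * V x) := summable_of_sum_le
    (fun x => mul_nonneg (h.nonneg x) (mul_nonneg (sub_nonneg.2 hγ.le) (hV x))) partial_sum_le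
  simpa only [mul_left_comm _ (1 - γ), summable_mul_left_iff (sub_pos.2 hγ).ne'] using hscaled

end InvariantWeight

/-! ### Blocks of the transition matrix -/

section Blocks

variable {m : ℕ} {A B : ℤ → Matrix (Fin m) (Fin m) ℝ}

theorem IsStationary.invariantWeight {Q : S m → S m → ℝ} {pd : S m → ℝ} (hpd : IsStationary Q pd)
    (hQ : Stochastic Q) : InvariantWeight Q pd :=
  ⟨hQ.1, hQ.2, hpd.1, hpd.2.1.summable, hpd.2.2⟩

theorem InvariantWeight.stochastic {Q : S m → S m → ℝ} {π : S m → ℝ}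
    (hinv : InvariantWeight Q π) : Stochastic Q :=
  ⟨hinv.kernel_nonneg, hinv.hasSum_kernel⟩

theorem Stochastic.blockA_nonneg (hP : Stochastic (P A B)) (k : ℤ) (r s : Fin m) :
    0 ≤ A k r s := by
  rw [← Int.toNat_sub_toNat_neg k]
  exact hP.1 ((-k).toNat + 1, r) (k.toNat + 1, s)

theorem Stochastic.blockB_nonneg (hP : Stochastic (P A B)) (k : ℤ) (r s : Fin m) :
    0 ≤ B k r s := by
  cases k with
  | ofNat k => exact hP.1 (0, r) (k, s)
  | negSucc k => exact hP.1 (k + 1, r) (0, s)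

theorem LightMat.eventually_summable {C : ℤ → Matrix (Fin m) (Fin m) ℝ} (hlight : LightMat C)
    (hC : ∀ k r s, 0 ≤ C k r s) :
    ∀ᶠ ε : ℝ in 𝓝[>] 0, ∀ r s,
      Summable fun k : ℕ => C ((k : ℤ) + 1) r s * Real.exp (ε * ((k : ℝ) + 1)) :=
  eventually_all.2 fun r => eventually_all.2 fun s =>
    LightTail.eventually_summable (hlight r s) fun _ => hC _ r s

theorem LightMat.eventually_summable_boundary (hlight : LightMat B) (hB : ∀ k r s, 0 ≤ B k r s) :
    ∀ᶠ ε : ℝ in 𝓝[>] 0, ∀ r,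
      Summable fun y : S m => B (y.1 : ℤ) r y.2 * Real.exp (ε * (y.1 : ℝ)) := by
  filter_upwards [hlight.eventually_summable hB] with ε hε r
  refine (hasSum_prod_of_fintype fun s => Summable.hasSum ((summable_nat_add_iff 1).1 ?_)).summable
  simpa only [Nat.cast_add, Nat.cast_one] using hε r s

theorem PhaseStochastic.summable_entry (hphase : PhaseStochastic A) (r s : Fin m) :
    Summable fun k => A k r s :=
  (hphase r).summable.comp_injective (Prod.mk_left_injective s)

theorem LightMat.eventually_summable_interior (hlight : LightMat A) (hA : ∀ k r s, 0 ≤ A k r s)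
    (hphase : PhaseStochastic A) :
    ∀ᶠ ε : ℝ in 𝓝[>] 0, ∀ r,
      Summable fun p : ℤ × Fin m => A p.1 r p.2 * Real.exp (ε * max (p.1 : ℝ) 0) := by
  filter_upwards [hlight.eventually_summable hA] with ε hε r
  refine (hasSum_prod_of_fintype fun s => Summable.hasSum ?_).summable
  refine Summable.of_nat_of_neg_add_one ((summable_nat_add_iff 1).1 ?_) ?_
  · refine (hε r s).congr fun k => ?_
    have max_cast : max (((k + 1 : ℕ) : ℤ) : ℝ) 0 = k + 1 := by
      rw [Int.cast_natCast, Nat.cast_succ, max_eq_left (by positivity)]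
    rw [max_cast, Nat.cast_succ]
  · have neg_succ_injective : Function.Injective fun k : ℕ => -((k : ℤ) + 1) := fun k l h => by
      simpa using h
    refine ((hphase.summable_entry r s).comp_injective neg_succ_injective).congr fun k => ?_
    have : ((-((k : ℤ) + 1) : ℤ) : ℝ) ≤ 0 := by exact_mod_cast (by omega : -((k : ℤ) + 1) ≤ 0)
    rw [max_eq_right this, mul_zero, Real.exp_zero, mul_one, Function.comp_apply]

theorem PhaseStochastic.hasSum_mul_phase (hphase : PhaseStochastic A) (g : Fin m → ℝ) (r : Fin m) :
    HasSum (fun p : ℤ × Fin m => A p.1 r p.2 * g p.2) ((matA A).mulVec g r) :=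
  hasSum_prod_of_fintype fun s => (hphase.summable_entry r s).hasSum.mul_right (g s)

theorem PhaseStochastic.matA_mem_rowStochastic (hphase : PhaseStochastic A)
    (hA : ∀ k r s, 0 ≤ A k r s) : matA A ∈ Matrix.rowStochastic ℝ (Fin m) := by
  refine Matrix.mem_rowStochastic.2 ⟨fun r s => tsum_nonneg fun k => hA k r s, funext fun r => ?_⟩
  refine (hphase.hasSum_mul_phase 1 r).unique ?_
  simpa only [Pi.one_apply, mul_one] using hphase r

theorem hasSum_P_succ_iff_of_eq_zero {G : ℤ → Fin m → ℝ} (hG : ∀ k ≤ 0, ∀ s, G k s = 0) (i : ℕ)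
    (r : Fin m) {a : ℝ} :
    HasSum (fun y : S m => P A B (i + 1, r) y * G y.1 y.2) a ↔
      HasSum (fun p : ℤ × Fin m => A p.1 r p.2 * G (i + 1 + p.1) p.2) a := by
  let toState (q : ℕ × Fin m) : S m := (q.1 + 1, q.2)
  let toIncrement (q : ℕ × Fin m) : ℤ × Fin m := (q.1 - i, q.2)
  have toState_injective : Function.Injective toState := fun p q h => by
    simpa [toState, Prod.ext_iff] using h
  have toIncrement_injective : Function.Injective toIncrement := fun p q h => by
    simpa [toIncrement, Prod.ext_iff] using h
  rw [← toState_injective.hasSum_iff, ← toIncrement_injective.hasSum_iff]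
  · refine iff_of_eq (congrArg (HasSum · a) (funext fun q => ?_))
    change A (q.1 - i) r q.2 * G (q.1 + 1 : ℕ) q.2 = A (q.1 - i) r q.2 * G (i + 1 + (q.1 - i)) q.2
    congr 2
    push_cast
    ring
  · rintro ⟨k, s⟩ hk
    rw [hG _ (not_lt.1 fun hpos => hk ⟨((i + k).toNat, s), ?_⟩), mul_zero]
    exact Prod.ext (by simp only [toIncrement]; omega) rfl
  · rintro ⟨_ | k, s⟩ hk
    · exact mul_eq_zero_of_right _ (hG _ le_rfl s)
    · exact absurd ⟨(k, s), rfl⟩ hk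

/-- Above level `0` the chain moves like the homogeneous walk with increments `A`, as long as it is
observed through a function that does not distinguish the levels `k ≤ 0`. -/
theorem hasSum_P_succ_iff (hP : Stochastic (P A B)) (hphase : PhaseStochastic A)
    {G : ℤ → Fin m → ℝ} {c : ℝ} (hG : ∀ k ≤ 0, ∀ s, G k s = c) (i : ℕ) (r : Fin m) {a : ℝ} :
    HasSum (fun y : S m => P A B (i + 1, r) y * G y.1 y.2) a ↔
      HasSum (fun p : ℤ × Fin m => A p.1 r p.2 * G (i + 1 + p.1) p.2) a := by
  have hcentred := hasSum_P_succ_iff_of_eq_zero (A := A) (B := B) (G := fun k s => G k s - c)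
    (fun k hk s => sub_eq_zero.2 (hG k hk s)) i r (a := a - 1 * c)
  constructor <;> intro h
  · have := (hcentred.1 ?_).add ((hphase r).mul_right c)
    · simpa only [mul_sub, sub_add_cancel] using this
    · simpa only [mul_sub] using h.sub ((hP.2 _).mul_right c)
  · have := (hcentred.2 ?_).add ((hP.2 (i + 1, r)).mul_right c)
    · simpa only [mul_sub, sub_add_cancel] using this
    · simpa only [mul_sub] using h.sub ((hphase r).mul_right c)

end Blocks

/-! ### Phase corrections of the level -/

/-- `g` solves the Poisson equation of the phase process for the increment function `c`: the
corrected increments `c k + g s - g r` have the same mean `σ` (the mean drift) from every phase `r`.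
The normalisation `g ≤ 0`, free because the equation only involves differences of `g`, makes
`correctedLevel g` vanish on the levels `k ≤ 0`. -/
structure IsPhaseCorrection {m : ℕ} (A : ℤ → Matrix (Fin m) (Fin m) ℝ) (c : ℤ → ℝ)
    (g : Fin m → ℝ) (σ : ℝ) : Prop where
  nonpos : ∀ s, g s ≤ 0
  hasSum : ∀ r, HasSum (fun p : ℤ × Fin m => A p.1 r p.2 * (c p.1 + g p.2 - g r)) σ

/-- The test function of the drift arguments: the level plus a phase correction, cut off at `0`. -/
noncomputable def correctedLevel {m : ℕ} (g : Fin m → ℝ) (k : ℤ) (s : Fin m) : ℝ :=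
  max (k + g s) 0

section PhaseCorrection

variable {m : ℕ} {A B : ℤ → Matrix (Fin m) (Fin m) ℝ} {g : Fin m → ℝ}

theorem exists_isPhaseCorrection [Nonempty (Fin m)] (hA : ∀ k r s, 0 ≤ A k r s)
    (hphase : PhaseStochastic A) (hirr : MatIrreducible (matA A)) :
    ∃ w : Fin m → ℝ, (∀ r, 0 < w r) ∧ ∀ c : ℤ → ℝ,
      (∀ r, Summable fun p : ℤ × Fin m => A p.1 r p.2 * c p.1) →
        ∃ g, IsPhaseCorrection A c g (∑ r, w r * ∑' p : ℤ × Fin m, A p.1 r p.2 * c p.1) := by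
  have hstoch := hphase.matA_mem_rowStochastic hA
  obtain ⟨w, hw, hpoisson⟩ := exists_weights_poisson hstoch <|
    (Matrix.isIrreducible_iff_exists_pow_pos fun r s =>
      Matrix.nonneg_of_mem_rowStochastic hstoch).2 hirr
  refine ⟨w, hw, fun c hc => ?_⟩
  obtain ⟨g, hg⟩ := hpoisson fun r => ∑' p : ℤ × Fin m, A p.1 r p.2 * c p.1
  obtain ⟨t, ht⟩ := Finite.exists_max g
  refine ⟨fun s => g s - g t, fun s => sub_nonpos.2 (ht s), fun r => ?_⟩
  have hsum := ((hc r).hasSum.add (hphase.hasSum_mul_phase g r)).sub ((hphase r).mul_right (g r))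
  rw [one_mul, hg r] at hsum
  exact hsum.congr_fun fun p => by ring

theorem exists_isPhaseCorrection_neg_or_nonneg [Nonempty (Fin m)] (hA : ∀ k r s, 0 ≤ A k r s)
    (hphase : PhaseStochastic A) (hirr : MatIrreducible (matA A))
    (hpos : ∀ r, Summable fun p : ℤ × Fin m => A p.1 r p.2 * max (p.1 : ℝ) 0) :
    (∃ (K : ℕ) (g : Fin m → ℝ) (σ : ℝ),
        σ < 0 ∧ IsPhaseCorrection A (fun k => max (k : ℝ) (-K)) g σ) ∨
      ∃ (g : Fin m → ℝ) (σ : ℝ), 0 ≤ σ ∧ IsPhaseCorrection A (fun k => (k : ℝ)) g σ := by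
  obtain ⟨w, hw, hcorrection⟩ := exists_isPhaseCorrection hA hphase hirr
  rcases exists_truncated_mean_neg_or_summable (b := fun r (p : ℤ × Fin m) => A p.1 r p.2)
    (x := fun p => (p.1 : ℝ)) hw (fun r p => hA p.1 r p.2) (fun r => (hphase r).summable) hpos
    with ⟨K, hK⟩ | ⟨hsum, hmean⟩
  · have hsum_trunc (r) : Summable fun p : ℤ × Fin m => A p.1 r p.2 * max (p.1 : ℝ) (-K) :=
      summable_mul_max_of_summable_mul_max_zero (a := fun p : ℤ × Fin m => A p.1 r p.2)
        (fun p => hA p.1 r p.2) (hphase r).summable (hpos r) (-K)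
    obtain ⟨g, hg⟩ := hcorrection (fun k => max (k : ℝ) (-K)) hsum_trunc
    exact Or.inl ⟨K, g, _, hK, hg⟩
  · obtain ⟨g, hg⟩ := hcorrection (fun k => (k : ℝ)) hsum
    exact Or.inr ⟨g, _, hmean, hg⟩

theorem correctedLevel_nonneg (g : Fin m → ℝ) (k : ℤ) (s : Fin m) : 0 ≤ correctedLevel g k s :=
  le_max_right _ _

theorem le_correctedLevel (g : Fin m → ℝ) (k : ℤ) (s : Fin m) : k + g s ≤ correctedLevel g k s :=
  le_max_left _ _

theorem correctedLevel_le (hg : ∀ s, g s ≤ 0) (n : ℕ) (s : Fin m) : correctedLevel g n s ≤ n := by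
  refine max_le ?_ n.cast_nonneg
  rw [Int.cast_natCast]
  linarith [hg s]

theorem correctedLevel_eq_zero (hg : ∀ s, g s ≤ 0) {k : ℤ} (hk : k ≤ 0) (s : Fin m) :
    correctedLevel g k s = 0 := by
  have : (k : ℝ) ≤ 0 := by exact_mod_cast hk
  exact max_eq_right (by linarith [hg s])

theorem abs_correctedLevel_add_sub_le (g : Fin m → ℝ) (i k : ℤ) (r s : Fin m) :
    |correctedLevel g (i + k) s - correctedLevel g i r| ≤ |k + g s - g r| := by
  refine (abs_max_sub_max_le_abs _ _ _).trans_eq ?_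
  rw [Int.cast_add]
  ring_nf

theorem hasSum_P_succ_correctedLevel_iff (hP : Stochastic (P A B)) (hphase : PhaseStochastic A)
    (hg : ∀ s, g s ≤ 0) (φ : ℝ → ℝ) (i : ℕ) (r : Fin m) {a : ℝ} :
    HasSum (fun y : S m => P A B (i + 1, r) y * φ (correctedLevel g y.1 y.2)) a ↔
      HasSum (fun p : ℤ × Fin m => A p.1 r p.2 * φ (correctedLevel g (i + 1 + p.1) p.2)) a :=
  hasSum_P_succ_iff hP hphase (G := fun k s => φ (correctedLevel g k s))
    (fun _ hk s => congrArg φ (correctedLevel_eq_zero hg hk s)) i r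

end PhaseCorrection

/-! ### Negativity of the mean drift -/

section MeanDrift

variable {m : ℕ} {A B : ℤ → Matrix (Fin m) (Fin m) ℝ} {g : Fin m → ℝ} {σ : ℝ}

theorem summable_P_zero_abs_correctedLevel_sub (hP : Stochastic (P A B)) (hg : ∀ s, g s ≤ 0)
    (hB : ∀ r, Summable fun y : S m => B y.1 r y.2 * (y.1 : ℝ)) (r : Fin m) :
    (Summable fun y : S m => P A B (0, r) y * |correctedLevel g y.1 y.2 - correctedLevel g 0 r|) ∧
      ∑' y : S m, P A B (0, r) y * |correctedLevel g y.1 y.2 - correctedLevel g 0 r| ≤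
        ∑' y : S m, B y.1 r y.2 * (y.1 : ℝ) := by
  have hle (y : S m) : P A B (0, r) y * |correctedLevel g y.1 y.2 - correctedLevel g 0 r| ≤
      B y.1 r y.2 * (y.1 : ℝ) := by
    rw [correctedLevel_eq_zero hg le_rfl, sub_zero, abs_of_nonneg (correctedLevel_nonneg _ _ _)]
    exact mul_le_mul_of_nonneg_left (correctedLevel_le hg _ _) (hP.blockB_nonneg _ _ _)
  have hsum := (hB r).of_nonneg_of_le (fun y => mul_nonneg (hP.1 _ _) (abs_nonneg _)) hle
  exact ⟨hsum, hsum.tsum_le_tsum hle (hB r)⟩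

theorem IsPhaseCorrection.summable_abs {c : ℤ → ℝ} (hg : IsPhaseCorrection A c g σ)
    (hA : ∀ k r s, 0 ≤ A k r s) (r : Fin m) :
    Summable fun p : ℤ × Fin m => A p.1 r p.2 * |c p.1 + g p.2 - g r| :=
  (hg.hasSum r).summable.norm.congr fun p => by
    rw [norm_mul, Real.norm_of_nonneg (hA _ _ _), Real.norm_eq_abs]

theorem IsPhaseCorrection.summable_P_succ_abs_correctedLevel_sub
    (hg : IsPhaseCorrection A (fun k => (k : ℝ)) g σ) (hP : Stochastic (P A B))
    (hphase : PhaseStochastic A) (i : ℕ) (r : Fin m) :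
    (Summable fun y : S m =>
        P A B (i + 1, r) y * |correctedLevel g y.1 y.2 - correctedLevel g (i + 1) r|) ∧
      ∑' y : S m, P A B (i + 1, r) y * |correctedLevel g y.1 y.2 - correctedLevel g (i + 1) r| ≤
        ∑' p : ℤ × Fin m, A p.1 r p.2 * |p.1 + g p.2 - g r| := by
  have hA := hP.blockA_nonneg
  have hle (p : ℤ × Fin m) :
      A p.1 r p.2 * |correctedLevel g (i + 1 + p.1) p.2 - correctedLevel g (i + 1) r| ≤
        A p.1 r p.2 * |p.1 + g p.2 - g r| :=
    mul_le_mul_of_nonneg_left (abs_correctedLevel_add_sub_le g _ _ _ _) (hA _ _ _)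
  have hsum := (hg.summable_abs hA r).of_nonneg_of_le
    (fun p => mul_nonneg (hA _ _ _) (abs_nonneg _)) hle
  have hasSum_P := (hasSum_P_succ_correctedLevel_iff hP hphase hg.nonpos
    (fun t => |t - correctedLevel g (i + 1) r|) i r).2 hsum.hasSum
  exact ⟨hasSum_P.summable,
    hasSum_P.tsum_eq.trans_le (hsum.tsum_le_tsum hle (hg.summable_abs hA r))⟩

theorem IsPhaseCorrection.exists_tsum_abs_correctedLevel_sub_le
    (hg : IsPhaseCorrection A (fun k => (k : ℝ)) g σ) (hP : Stochastic (P A B))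
    (hphase : PhaseStochastic A) (hB : ∀ r, Summable fun y : S m => B y.1 r y.2 * (y.1 : ℝ)) :
    ∃ C, ∀ x : S m,
      (Summable fun y : S m =>
        P A B x y * |correctedLevel g y.1 y.2 - correctedLevel g x.1 x.2|) ∧
      ∑' y : S m, P A B x y * |correctedLevel g y.1 y.2 - correctedLevel g x.1 x.2| ≤ C := by
  obtain ⟨C₀, hC₀⟩ :=
    (Set.finite_range fun r => ∑' y : S m, B y.1 r y.2 * (y.1 : ℝ)).bddAbove
  obtain ⟨C₁, hC₁⟩ :=
    (Set.finite_range fun r => ∑' p : ℤ × Fin m, A p.1 r p.2 * |p.1 + g p.2 - g r|).bddAbove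
  refine ⟨max C₀ C₁, ?_⟩
  rintro ⟨_ | i, r⟩
  · obtain ⟨hsum, hle⟩ := summable_P_zero_abs_correctedLevel_sub hP hg.nonpos hB r
    exact ⟨hsum, hle.trans ((hC₀ ⟨r, rfl⟩).trans (le_max_left _ _))⟩
  · obtain ⟨hsum, hle⟩ := hg.summable_P_succ_abs_correctedLevel_sub hP hphase i r
    exact ⟨hsum, hle.trans ((hC₁ ⟨r, rfl⟩).trans (le_max_right _ _))⟩

theorem IsPhaseCorrection.drift_correctedLevel_nonneg
    (hg : IsPhaseCorrection A (fun k => (k : ℝ)) g σ) (hσ : 0 ≤ σ) (hP : Stochastic (P A B))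
    (hphase : PhaseStochastic A) (x : S m) :
    0 ≤ ∑' y : S m, P A B x y * (correctedLevel g y.1 y.2 - correctedLevel g x.1 x.2) := by
  rcases (correctedLevel_nonneg g x.1 x.2).eq_or_lt with hx | hx
  · simp only [← hx, sub_zero]
    exact tsum_nonneg fun y => mul_nonneg (hP.1 _ _) (correctedLevel_nonneg _ _ _)
  · obtain ⟨_ | i, r⟩ := x
    · exact absurd (correctedLevel_eq_zero hg.nonpos le_rfl r) hx.ne'
    · have hlevel : correctedLevel g (i + 1) r = i + 1 + g r := by
        have := max_eq_left ((lt_max_iff.1 hx).resolve_right (lt_irrefl 0)).le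
        exact_mod_cast this
      have hsum : Summable fun y : S m =>
          P A B (i + 1, r) y * (correctedLevel g y.1 y.2 - correctedLevel g (i + 1) r) :=
        .of_norm <| (hg.summable_P_succ_abs_correctedLevel_sub hP hphase i r).1.congr fun y => by
          rw [norm_mul, Real.norm_of_nonneg (hP.1 _ _), Real.norm_eq_abs]
      have hasSum_walk := (hasSum_P_succ_correctedLevel_iff hP hphase hg.nonpos
        (fun t => t - correctedLevel g (i + 1) r) i r).1 hsum.hasSum
      refine hσ.trans (hasSum_le (fun p => ?_) (hg.hasSum r) hasSum_walk)
      refine mul_le_mul_of_nonneg_left ?_ (hP.blockA_nonneg _ _ _)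
      have := le_correctedLevel g (i + 1 + p.1) p.2
      push_cast at this
      linarith

/-- With a nonnegative mean drift the corrected level would be a submartingale with bounded mean
increments, hence a martingale under the stationary distribution. A nonnegative martingale cannot
leave `0`, so by irreducibility the corrected level would vanish everywhere. -/
theorem IsPhaseCorrection.drift_neg [Nonempty (Fin m)] {π : S m → ℝ}
    (hg : IsPhaseCorrection A (fun k => (k : ℝ)) g σ) (hphase : PhaseStochastic A)
    (hB : ∀ r, Summable fun y : S m => B y.1 r y.2 * (y.1 : ℝ))
    (hirr : (Matrix.of (P A B)).IsIrreducible) (hinv : InvariantWeight (P A B) π)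
    (hpos : ∀ x, 0 < π x) : σ < 0 := by
  by_contra! hσ
  have hP := hinv.stochastic
  obtain ⟨C, hC⟩ := hg.exists_tsum_abs_correctedLevel_sub_le hP hphase hB
  have zero_absorbing (x y : S m) (hx : correctedLevel g x.1 x.2 = 0) (hxy : 0 < P A B x y) :
      correctedLevel g y.1 y.2 = 0 := by
    have drift_eq_zero := hinv.drift_eq_zero_of_nonneg
      (f := fun y : S m => correctedLevel g y.1 y.2) (x := x) (fun z => (hC z).1)
      (fun z => (hC z).2) (hg.drift_correctedLevel_nonneg hσ hP hphase) (hpos x).ne'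
    have term_nonneg (y : S m) : 0 ≤ P A B x y * correctedLevel g y.1 y.2 :=
      mul_nonneg (hP.1 _ _) (correctedLevel_nonneg _ _ _)
    have hsum := (hC x).1
    simp only [hx, sub_zero, abs_of_nonneg, correctedLevel_nonneg] at hsum drift_eq_zero
    have := congrFun ((hasSum_zero_iff_of_nonneg term_nonneg).1 (drift_eq_zero ▸ hsum.hasSum)) y
    exact (mul_eq_zero.1 this).resolve_left hxy.ne'
  obtain ⟨r⟩ := ‹Nonempty (Fin m)›
  obtain ⟨n, hn⟩ := exists_nat_gt (-g r)
  have level_eq_zero := forall_of_isIrreducible hirr zero_absorbing (x := (0, r))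
    (correctedLevel_eq_zero hg.nonpos le_rfl r) (n, r)
  have := le_correctedLevel g n r
  rw [level_eq_zero, Int.cast_natCast] at this
  linarith

end MeanDrift

/-! ### Geometric drift -/

section GeometricDrift

variable {m : ℕ} {A B : ℤ → Matrix (Fin m) (Fin m) ℝ} {g : Fin m → ℝ} {σ : ℝ}

theorem IsPhaseCorrection.eventually_tsum_mul_exp_lt_one {K : ℕ}
    (hg : IsPhaseCorrection A (fun k => max (k : ℝ) (-K)) g σ) (hσ : σ < 0)
    (hA : ∀ k r s, 0 ≤ A k r s) (hphase : PhaseStochastic A) (hlight : LightMat A) :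
    ∀ᶠ ε : ℝ in 𝓝[>] 0, ∀ r,
      (Summable fun p : ℤ × Fin m =>
        A p.1 r p.2 * Real.exp (ε * (max (p.1 : ℝ) (-K) + g p.2 - g r))) ∧
      ∑' p : ℤ × Fin m, A p.1 r p.2 * Real.exp (ε * (max (p.1 : ℝ) (-K) + g p.2 - g r)) < 1 := by
  obtain ⟨δ, hδ, hδ_pos⟩ :=
    ((hlight.eventually_summable_interior hA hphase).and self_mem_nhdsWithin).exists
  refine eventually_all.2 fun r => GIG1.eventually_tsum_mul_exp_lt_one (δ := δ)
    (a := fun p : ℤ × Fin m => A p.1 r p.2) (x := fun p => max (p.1 : ℝ) (-K) + g p.2 - g r)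
    hδ_pos (hphase r) ?_ ((hg.hasSum r).tsum_eq.trans_lt hσ)
  have abs_increment_le (k : ℤ) (s) :
      |max (k : ℝ) (-K) + g s - g r| ≤ max (k : ℝ) 0 + (K + 2 * ‖g‖) := by
    have hs := abs_le.1 (norm_le_pi_norm g s)
    have hr := abs_le.1 (norm_le_pi_norm g r)
    rw [abs_le]
    constructor <;> rcases max_cases (k : ℝ) (-K) with h | h <;>
      rcases max_cases (k : ℝ) 0 with h0 | h0 <;>
      linarith [K.cast_nonneg (α := ℝ)]
  refine ((hδ r).mul_right (Real.exp (δ * (K + 2 * ‖g‖)))).of_nonneg_of_le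
    (fun p => mul_nonneg (hA _ _ _) (Real.exp_pos _).le) fun p => ?_
  rw [mul_assoc, ← Real.exp_add, ← mul_add]
  exact mul_le_mul_of_nonneg_left (Real.exp_le_exp.2 <|
    mul_le_mul_of_nonneg_left (abs_increment_le _ _) hδ_pos.le) (hA _ _ _)

theorem exp_correctedLevel_add_le {ε : ℝ} (hε : 0 ≤ ε) (g : Fin m → ℝ) (i k : ℤ) (r s : Fin m)
    {t : ℝ} (hk : k ≤ t) :
    Real.exp (ε * correctedLevel g (i + k) s) ≤
      1 + Real.exp (ε * correctedLevel g i r) * Real.exp (ε * (t + g s - g r)) := by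
  rw [← Real.exp_add, ← mul_add]
  rcases max_cases (((i + k : ℤ) : ℝ) + g s) 0 with ⟨h, -⟩ | ⟨h, -⟩
  · have hle : correctedLevel g (i + k) s ≤ correctedLevel g i r + (t + g s - g r) := by
      rw [correctedLevel, h]
      push_cast
      linarith [le_correctedLevel g i r]
    linarith [Real.exp_le_exp.2 (mul_le_mul_of_nonneg_left hle hε)]
  · rw [correctedLevel, h, mul_zero, Real.exp_zero]
    exact le_add_of_nonneg_right (Real.exp_pos _).le

theorem summable_P_zero_exp_correctedLevel (hP : Stochastic (P A B)) (hg : ∀ s, g s ≤ 0) {ε : ℝ}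
    (hε : 0 ≤ ε) {r : Fin m}
    (hB : Summable fun y : S m => B y.1 r y.2 * Real.exp (ε * (y.1 : ℝ))) :
    (Summable fun y : S m => P A B (0, r) y * Real.exp (ε * correctedLevel g y.1 y.2)) ∧
      ∑' y : S m, P A B (0, r) y * Real.exp (ε * correctedLevel g y.1 y.2) ≤
        ∑' y : S m, B y.1 r y.2 * Real.exp (ε * (y.1 : ℝ)) := by
  have hle (y : S m) : P A B (0, r) y * Real.exp (ε * correctedLevel g y.1 y.2) ≤
      B y.1 r y.2 * Real.exp (ε * (y.1 : ℝ)) :=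
    mul_le_mul_of_nonneg_left (Real.exp_le_exp.2 <|
      mul_le_mul_of_nonneg_left (correctedLevel_le hg _ _) hε) (hP.blockB_nonneg _ _ _)
  have hsum := hB.of_nonneg_of_le (fun y => mul_nonneg (hP.1 _ _) (Real.exp_pos _).le) hle
  exact ⟨hsum, hsum.tsum_le_tsum hle hB⟩

theorem summable_P_succ_exp_correctedLevel (hP : Stochastic (P A B)) (hphase : PhaseStochastic A)
    (hg : ∀ s, g s ≤ 0) {c : ℤ → ℝ} (hc : ∀ k : ℤ, k ≤ c k) {ε : ℝ} (hε : 0 ≤ ε) {r : Fin m}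
    (hA : Summable fun p : ℤ × Fin m =>
      A p.1 r p.2 * Real.exp (ε * (c p.1 + g p.2 - g r))) (i : ℕ) :
    (Summable fun y : S m => P A B (i + 1, r) y * Real.exp (ε * correctedLevel g y.1 y.2)) ∧
      ∑' y : S m, P A B (i + 1, r) y * Real.exp (ε * correctedLevel g y.1 y.2) ≤
        (∑' p : ℤ × Fin m, A p.1 r p.2 * Real.exp (ε * (c p.1 + g p.2 - g r))) *
          Real.exp (ε * correctedLevel g (i + 1) r) + 1 := by
  have hmajorant := (hA.hasSum.mul_right (Real.exp (ε * correctedLevel g (i + 1) r))).add (hphase r)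
  have hle (p : ℤ × Fin m) : A p.1 r p.2 * Real.exp (ε * correctedLevel g (i + 1 + p.1) p.2) ≤
      A p.1 r p.2 * Real.exp (ε * (c p.1 + g p.2 - g r)) *
        Real.exp (ε * correctedLevel g (i + 1) r) + A p.1 r p.2 := by
    have := mul_le_mul_of_nonneg_left
      (exp_correctedLevel_add_le hε g (i + 1) p.1 r p.2 (hc p.1)) (hP.blockA_nonneg p.1 r p.2)
    linarith
  have hsum := hmajorant.summable.of_nonneg_of_le
    (fun p => mul_nonneg (hP.blockA_nonneg _ _ _) (Real.exp_pos _).le) hle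
  have hasSum_P := (hasSum_P_succ_correctedLevel_iff hP hphase hg
    (fun t => Real.exp (ε * t)) i r).2 hsum.hasSum
  exact ⟨hasSum_P.summable, hasSum_P.tsum_eq.trans_le (hasSum_le hle hsum.hasSum hmajorant)⟩

theorem IsPhaseCorrection.exists_summable_mul_exp_correctedLevel [Nonempty (Fin m)]
    {π : S m → ℝ} {K : ℕ}
    (hg : IsPhaseCorrection A (fun k => max (k : ℝ) (-K)) g σ) (hσ : σ < 0)
    (hphase : PhaseStochastic A) (hA : LightMat A) (hB : LightMat B)
    (hinv : InvariantWeight (P A B) π) :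
    ∃ ε > 0, Summable fun x : S m => π x * Real.exp (ε * correctedLevel g x.1 x.2) := by
  have hP := hinv.stochastic
  obtain ⟨ε, ⟨hinterior, hboundary⟩, hε⟩ :=
    (((hg.eventually_tsum_mul_exp_lt_one hσ hP.blockA_nonneg hphase hA).and
      (hB.eventually_summable_boundary hP.blockB_nonneg)).and self_mem_nhdsWithin).exists
  obtain ⟨t, ht⟩ := Finite.exists_max fun r => ∑' p : ℤ × Fin m,
    A p.1 r p.2 * Real.exp (ε * (max (p.1 : ℝ) (-K) + g p.2 - g r))
  obtain ⟨C, hC⟩ := (Set.finite_range fun r =>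
    ∑' y : S m, B y.1 r y.2 * Real.exp (ε * (y.1 : ℝ))).bddAbove
  have geometric_drift (x : S m) :
      (Summable fun y : S m => P A B x y * Real.exp (ε * correctedLevel g y.1 y.2)) ∧
      ∑' y : S m, P A B x y * Real.exp (ε * correctedLevel g y.1 y.2) ≤
        (∑' p : ℤ × Fin m, A p.1 t p.2 * Real.exp (ε * (max (p.1 : ℝ) (-K) + g p.2 - g t))) *
          Real.exp (ε * correctedLevel g x.1 x.2) + max C 1 := by
    obtain ⟨_ | i, r⟩ := x
    · obtain ⟨hsum, hle⟩ := summable_P_zero_exp_correctedLevel hP hg.nonpos hε.le (hboundary r)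
      refine ⟨hsum, hle.trans ((hC ⟨r, rfl⟩).trans ((le_max_left C 1).trans ?_))⟩
      exact le_add_of_nonneg_left <| mul_nonneg
        (tsum_nonneg fun p => mul_nonneg (hP.blockA_nonneg _ _ _) (Real.exp_pos _).le)
        (Real.exp_pos _).le
    · obtain ⟨hsum, hle⟩ := summable_P_succ_exp_correctedLevel hP hphase hg.nonpos
        (fun k => le_max_left (k : ℝ) (-K)) hε.le (hinterior r).1 i
      exact ⟨hsum, hle.trans <|
        add_le_add (mul_le_mul_of_nonneg_right (ht r) (Real.exp_pos _).le) (le_max_right C 1)⟩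
  exact ⟨ε, hε, hinv.summable_mul_of_geometric_drift (hinterior t).2
    (zero_le_one.trans (le_max_right C 1)) (fun _ => (Real.exp_pos _).le)
    (fun x => (geometric_drift x).1) fun x => (geometric_drift x).2⟩

theorem lightTail_of_summable_mul_exp_correctedLevel {π : S m → ℝ} (hπ : ∀ x, 0 ≤ π x) {ε : ℝ}
    (hε : 0 < ε) (hsum : Summable fun x : S m => π x * Real.exp (ε * correctedLevel g x.1 x.2))
    (j : Fin m) : LightTail fun k => π (k + 1, j) := by
  have level_injective : Function.Injective fun k : ℕ => ((k + 1, j) : S m) := fun k l h => by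
    simpa using h
  refine ⟨ε, hε, ((hsum.comp_injective level_injective).mul_right (Real.exp (-(ε * g j)))
    ).of_nonneg_of_le (fun k => mul_nonneg (hπ _) (Real.exp_pos _).le) fun k => ?_⟩
  rw [Function.comp_apply, mul_assoc, ← Real.exp_add]
  refine mul_le_mul_of_nonneg_left (Real.exp_le_exp.2 ?_) (hπ _)
  have := mul_le_mul_of_nonneg_left (le_correctedLevel g (k + 1 : ℕ) j) hε.le
  push_cast at this ⊢
  linarith

end GeometricDrift

/-! ### Light tails of the stationary distribution -/

section LightTailedStationary

variable {m : ℕ} {A B : ℤ → Matrix (Fin m) (Fin m) ℝ} {π : S m → ℝ}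

theorem lightMat_interior_of_lightTail (hinv : InvariantWeight (P A B) π) (hpos : ∀ x, 0 < π x)
    (hlight : ∀ j, LightTail fun k => π (k + 1, j)) : LightMat A := fun r s => by
  refine (hlight s).comp_succ.of_le_mul (C := (π (1, r))⁻¹) (c := fun k : ℕ => A (k + 1) r s)
    (fun k => hinv.stochastic.blockA_nonneg _ r s) fun k => ?_
  rw [inv_mul_eq_div, le_div_iff₀' (hpos _)]
  simpa [P] using hinv.mul_kernel_le (1, r) (k + 2, s)

theorem lightMat_boundary_of_lightTail (hinv : InvariantWeight (P A B) π) (hpos : ∀ x, 0 < π x)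
    (hlight : ∀ j, LightTail fun k => π (k + 1, j)) : LightMat B := fun r s => by
  refine (hlight s).of_le_mul (C := (π (0, r))⁻¹) (c := fun k : ℕ => B (k + 1) r s)
    (fun k => hinv.stochastic.blockB_nonneg _ r s) fun k => ?_
  rw [inv_mul_eq_div, le_div_iff₀' (hpos _)]
  exact hinv.mul_kernel_le (0, r) (k + 1, s)

theorem lightTail_of_lightMat [Nonempty (Fin m)] (hirr : (Matrix.of (P A B)).IsIrreducible)
    (hphase : PhaseStochastic A) (hphaseirr : MatIrreducible (matA A))
    (hinv : InvariantWeight (P A B) π) (hpos : ∀ x, 0 < π x) (hA : LightMat A) (hB : LightMat B)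
    (j : Fin m) : LightTail fun k => π (k + 1, j) := by
  have hP := hinv.stochastic
  obtain ⟨δ, ⟨hexpA, hexpB⟩, hδ⟩ :=
    (((hA.eventually_summable_interior hP.blockA_nonneg hphase).and
      (hB.eventually_summable_boundary hP.blockB_nonneg)).and self_mem_nhdsWithin).exists
  have mean_interior (r) : Summable fun p : ℤ × Fin m => A p.1 r p.2 * max (p.1 : ℝ) 0 :=
    summable_mul_of_summable_mul_exp (a := fun p : ℤ × Fin m => A p.1 r p.2) hδ
      (fun p => hP.blockA_nonneg p.1 r p.2) (fun p => le_max_right _ _) (hexpA r)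
  have mean_boundary (r) : Summable fun y : S m => B y.1 r y.2 * (y.1 : ℝ) :=
    summable_mul_of_summable_mul_exp (a := fun y : S m => B y.1 r y.2) hδ
      (fun y => hP.blockB_nonneg y.1 r y.2) (fun y => y.1.cast_nonneg) (hexpB r)
  rcases exists_isPhaseCorrection_neg_or_nonneg hP.blockA_nonneg hphase hphaseirr mean_interior
    with ⟨K, g, σ, hσ, hg⟩ | ⟨g, σ, hσ, hg⟩
  · obtain ⟨ε, hε, hsum⟩ := hg.exists_summable_mul_exp_correctedLevel hσ hphase hA hB hinv
    exact lightTail_of_summable_mul_exp_correctedLevel hinv.nonneg hε hsum j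
  · exact absurd (hg.drift_neg hphase mean_boundary hirr hinv hpos) hσ.not_gt

end LightTailedStationary

theorem stationary_light_tailed_iff_general {m : ℕ} (A B : ℤ → Matrix (Fin m) (Fin m) ℝ)
    (hP : Stochastic (P A B)) (hirr : ChainIrreducible (P A B)) (hphase : PhaseStochastic A)
    (hphaseirr : MatIrreducible (matA A)) (pd : S m → ℝ) (hpd : IsStationary (P A B) pd) :
    ((∀ j : Fin m, ∃ ε > (0 : ℝ),
        Summable fun k : ℕ => pd (k + 1, j) * Real.exp (ε * ((k : ℝ) + 1)))
      ↔ 1 < min (phiA A) (phiB B)) ∧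
    ((∀ j : Fin m, ∃ ε > (0 : ℝ),
        Summable fun k : ℕ => pd (k + 1, j) * Real.exp (ε * ((k : ℝ) + 1)))
      ↔ (LightMat A ∧ LightMat B)) := by
  have hinv := hpd.invariantWeight hP
  have hirr_matrix := hirr.isIrreducible hP.1
  obtain ⟨x, hx⟩ : ∃ x, pd x ≠ 0 := by
    by_contra! h
    exact zero_ne_one (hasSum_zero.unique (funext h ▸ hpd.2.1))
  have hpos := hinv.pos hirr_matrix hx
  have : Nonempty (Fin m) := ⟨x.2⟩
  have hlight : (∀ j, LightTail fun k => pd (k + 1, j)) ↔ LightMat A ∧ LightMat B :=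
    ⟨fun h =>
      ⟨lightMat_interior_of_lightTail hinv hpos h, lightMat_boundary_of_lightTail hinv hpos h⟩,
      fun h => lightTail_of_lightMat hirr_matrix hphase hphaseirr hinv hpos h.1 h.2⟩
  have hradius : 1 < min (phiA A) (phiB B) ↔ LightMat A ∧ LightMat B := by
    rw [lt_min_iff, phiA, phiB, one_lt_iInf_radius_iff_lightMat, one_lt_iInf_radius_iff_lightMat]
  exact ⟨hlight.trans hradius.symm, hlight⟩

/-- For an irreducible, aperiodic, positive recurrent `GI/G/1`-type Markov
chain whose phase matrix `A` is stochastic, the sequence of stationary probability vectors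
`{π_k}_{k ≥ 1}` is light-tailed iff `min(φ_{A+}, φ_{B+}) > 1`, equivalently iff both
`{A_k}_{k ≥ 1}` and `{B_k}_{k ≥ 1}` are light-tailed. -/
theorem stationary_light_tailed_iff {m : ℕ} (hm : 0 < m)
    (A B : ℤ → Matrix (Fin m) (Fin m) ℝ)
    (hA0 : ∀ k r s, 0 ≤ A k r s) (hB0 : ∀ k r s, 0 ≤ B k r s)
    (hP : Stochastic (P A B))
    (hirr : ChainIrreducible (P A B)) (hap : ChainAperiodic (P A B))
    (hphase : PhaseStochastic A) (hphaseirr : MatIrreducible (matA A))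
    (pd : S m → ℝ) (hpd : IsStationary (P A B) pd) :
    ((∀ j : Fin m, ∃ ε > (0 : ℝ),
        Summable fun k : ℕ => pd (k + 1, j) * Real.exp (ε * ((k : ℝ) + 1)))
      ↔ 1 < min (phiA A) (phiB B)) ∧
    ((∀ j : Fin m, ∃ ε > (0 : ℝ),
        Summable fun k : ℕ => pd (k + 1, j) * Real.exp (ε * ((k : ℝ) + 1)))
      ↔ (LightMat A ∧ LightMat B)) :=
  stationary_light_tailed_iff_general A B hP hirr hphase hphaseirr pd hpd

end GIG1
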